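/- arXiv:2309.07565 — 9 statements merged into one kernel-verified Lean document; each statement's English description precedes it below -/
import Mathlib

section
/- Let α, β, d, t, p, q ∈ ℝ with p ≥ 0. If L_q(S_p(L_t(0,0,α))) = (d, 0, β), then p = sqrt(2 + d² − 2·cos(α − β) + 2d·(sin α − sin β)). (Length of the straight segment of an LSL Dubins path.) -/
open Real

/-- Left-turn operator: arc of length `v` along the unit left-turning circle. -/
noncomputable def Lop (v : ℝ) : ℝ × ℝ × ℝ → ℝ × ℝ × ℝ :=
  fun c => (c.1 + Real.sin (c.2.2 + v) - Real.sin c.2.2,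
            c.2.1 - Real.cos (c.2.2 + v) + Real.cos c.2.2,
            c.2.2 + v)

/-- Right-turn operator: arc of length `v` along the unit right-turning circle. -/
noncomputable def Rop (v : ℝ) : ℝ × ℝ × ℝ → ℝ × ℝ × ℝ :=
  fun c => (c.1 - Real.sin (c.2.2 - v) + Real.sin c.2.2,
            c.2.1 + Real.cos (c.2.2 - v) - Real.cos c.2.2,
            c.2.2 - v)

/-- Straight-motion operator: straight segment of length `v`. -/
noncomputable def Sop (v : ℝ) : ℝ × ℝ × ℝ → ℝ × ℝ × ℝ :=
  fun c => (c.1 + v * Real.cos c.2.2, c.2.1 + v * Real.sin c.2.2, c.2.2)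

/-!
A left turn fixes the centre of the unit circle along which it runs, and a straight motion of
length `v` translates that centre by `v` along the heading. So the straight segment of an LSL path
is as long as the distance between the left-turning centres of the two end configurations.
-/

/-- The centre of the unit left-turning circle through the configuration `c`, obtained from its
position by moving unit distance along the left normal of its heading. The plane is encoded as
`ℂ`, so that `dist` is the Euclidean distance. -/
noncomputable def leftCenter (c : ℝ × ℝ × ℝ) : ℂ :=
  ⟨c.1 - sin c.2.2, c.2.1 + cos c.2.2⟩

theorem leftCenter_lop (v : ℝ) (c : ℝ × ℝ × ℝ) : leftCenter (Lop v c) = leftCenter c := by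
  apply Complex.ext <;> simp only [leftCenter, Lop] <;> ring

theorem leftCenter_sop (v : ℝ) (c : ℝ × ℝ × ℝ) :
    leftCenter (Sop v c) = leftCenter c + v * Complex.exp (c.2.2 * Complex.I) := by
  apply Complex.ext
  · simp only [leftCenter, Sop, Complex.add_re, Complex.re_ofReal_mul, Complex.exp_ofReal_mul_I_re]
    ring
  · simp only [leftCenter, Sop, Complex.add_im, Complex.im_ofReal_mul, Complex.exp_ofReal_mul_I_im]
    ring

theorem dist_leftCenter_sop (v : ℝ) (c : ℝ × ℝ × ℝ) :
    dist (leftCenter c) (leftCenter (Sop v c)) = |v| := by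
  rw [leftCenter_sop, dist_self_add_right, norm_mul, Complex.norm_exp_ofReal_mul_I, mul_one,
    Complex.norm_real, norm_eq_abs]

theorem dist_leftCenter_lsl (t p q : ℝ) (c : ℝ × ℝ × ℝ) :
    dist (leftCenter c) (leftCenter (Lop q (Sop p (Lop t c)))) = |p| := by
  rw [leftCenter_lop, ← leftCenter_lop t c, dist_leftCenter_sop]

theorem dist_leftCenter (x y α x' y' β : ℝ) :
    dist (leftCenter (x, y, α)) (leftCenter (x', y', β)) =
      √(2 + (x' - x) ^ 2 + (y' - y) ^ 2 - 2 * cos (α - β)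
        + 2 * (x' - x) * (sin α - sin β) - 2 * (y' - y) * (cos α - cos β)) := by
  rw [Complex.dist_eq_re_im, cos_sub]
  congr 1
  simp only [leftCenter]
  linear_combination sin_sq_add_cos_sq α + sin_sq_add_cos_sq β

theorem lsl_straight_length_general {x y α x' y' β t p q : ℝ}
    (h : Lop q (Sop p (Lop t (x, y, α))) = (x', y', β)) :
    |p| = √(2 + (x' - x) ^ 2 + (y' - y) ^ 2 - 2 * cos (α - β)
      + 2 * (x' - x) * (sin α - sin β) - 2 * (y' - y) * (cos α - cos β)) := by
  rw [← dist_leftCenter_lsl t p q (x, y, α), h, dist_leftCenter]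

theorem lsl_straight_length (α β d t p q : ℝ) (hp : 0 ≤ p)
    (h : Lop q (Sop p (Lop t (0, 0, α))) = (d, 0, β)) :
    p = Real.sqrt (2 + d ^ 2 - 2 * Real.cos (α - β) + 2 * d * (Real.sin α - Real.sin β)) := by
  simpa [abs_of_nonneg hp] using lsl_straight_length_general h
end

section
/- Let α, β, d, t, p, q ∈ ℝ with p ≥ 0. If R_q(S_p(R_t(0,0,α))) = (d, 0, β), then p = sqrt(2 + d² − 2·cos(α − β) − 2d·(sin α − sin β)). (Length of the straight segment of an RSR Dubins path.) -/
/-!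
A right turn moves along a unit circle, so it fixes the centre of that circle, and a straight motion
translates this centre by the vector travelled. Hence the length of the straight segment of an RSR
path is the distance between the right-turning centres of its two endpoints.
-/

open Real

/-- The centre of the unit right-turning circle through a configuration, as a point of the plane
`ℂ`, whose distance (unlike that of `ℝ × ℝ`) is Euclidean. It is the invariant of right turns from
which the length of a straight segment between two of them is read off. -/
noncomputable def rightCenter (c : ℝ × ℝ × ℝ) : ℂ :=
  ⟨c.1 + Real.sin c.2.2, c.2.1 - Real.cos c.2.2⟩

theorem rightCenter_Rop (v : ℝ) (c : ℝ × ℝ × ℝ) : rightCenter (Rop v c) = rightCenter c := by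
  apply Complex.ext <;> simp only [rightCenter, Rop] <;> ring

theorem rightCenter_Sop (v : ℝ) (c : ℝ × ℝ × ℝ) :
    rightCenter (Sop v c) = rightCenter c + v * Complex.exp (c.2.2 * Complex.I) := by
  apply Complex.ext
  · simp only [rightCenter, Sop, Complex.add_re, Complex.re_ofReal_mul,
      Complex.exp_ofReal_mul_I_re]
    ring
  · simp only [rightCenter, Sop, Complex.add_im, Complex.im_ofReal_mul,
      Complex.exp_ofReal_mul_I_im]
    ring

theorem dist_rightCenter_Sop (v : ℝ) (c : ℝ × ℝ × ℝ) :
    dist (rightCenter c) (rightCenter (Sop v c)) = |v| := by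
  rw [rightCenter_Sop, dist_self_add_right, norm_mul, Complex.norm_exp_ofReal_mul_I, mul_one,
    Complex.norm_real, Real.norm_eq_abs]

theorem dist_rightCenter_Rop_Sop_Rop (t p q : ℝ) (c : ℝ × ℝ × ℝ) :
    dist (rightCenter c) (rightCenter (Rop q (Sop p (Rop t c)))) = |p| := by
  rw [rightCenter_Rop, ← rightCenter_Rop t c, dist_rightCenter_Sop]

theorem dist_rightCenter (x y φ x' y' φ' : ℝ) :
    dist (rightCenter (x, y, φ)) (rightCenter (x', y', φ')) =
      √(2 + (x' - x) ^ 2 + (y' - y) ^ 2 - 2 * Real.cos (φ - φ')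
        - 2 * (x' - x) * (Real.sin φ - Real.sin φ')
        + 2 * (y' - y) * (Real.cos φ - Real.cos φ')) := by
  rw [Complex.dist_eq_re_im, Real.cos_sub]
  congr 1
  simp only [rightCenter]
  linear_combination Real.sin_sq_add_cos_sq φ + Real.sin_sq_add_cos_sq φ'

theorem rsr_straight_length_general {x y φ x' y' φ' t p q : ℝ}
    (h : Rop q (Sop p (Rop t (x, y, φ))) = (x', y', φ')) :
    |p| = √(2 + (x' - x) ^ 2 + (y' - y) ^ 2 - 2 * Real.cos (φ - φ')
      - 2 * (x' - x) * (Real.sin φ - Real.sin φ')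
      + 2 * (y' - y) * (Real.cos φ - Real.cos φ')) := by
  rw [← dist_rightCenter, ← h, dist_rightCenter_Rop_Sop_Rop]

theorem rsr_straight_length (α β d t p q : ℝ) (hp : 0 ≤ p)
    (h : Rop q (Sop p (Rop t (0, 0, α))) = (d, 0, β)) :
    p = Real.sqrt (2 + d ^ 2 - 2 * Real.cos (α - β) - 2 * d * (Real.sin α - Real.sin β)) := by
  simpa [abs_of_nonneg hp] using rsr_straight_length_general h
end

section
/- Reflection equivalence for LSR paths: let α, β, d, t, p, q ∈ ℝ. If R_q(S_p(L_t(0,0,α))) = (d, 0, β), then L_q(S_p(R_t(0,0,−α))) = (d, 0, −β). (An LSR path for orientation pair (α, β) yields a topologically equivalent RSL path with the same segment lengths for the pair (−α, −β).) -/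
open Real

/-!
Reflection in the `x`-axis interchanges left and right turns and preserves straight motion, so it
carries every LSR path to the RSL path with the same segment lengths. It fixes the points of the
axis and negates headings, which is how it acts on the two endpoints here.
-/

/-- The action on configurations of the reflection in the `x`-axis; being orientation-reversing,
it negates the heading as well as the ordinate. -/
def xAxisReflection (c : ℝ × ℝ × ℝ) : ℝ × ℝ × ℝ :=
  (c.1, -c.2.1, -c.2.2)

theorem xAxisReflection_involutive : Function.Involutive xAxisReflection := by
  intro c
  simp only [xAxisReflection, neg_neg]

theorem semiconj_xAxisReflection_lop_rop (v : ℝ) :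
    Function.Semiconj xAxisReflection (Lop v) (Rop v) := by
  intro c
  have heading : -c.2.2 - v = -(c.2.2 + v) := by ring
  simp only [xAxisReflection, Lop, Rop, heading, Real.sin_neg, Real.cos_neg, Prod.mk.injEq,
    and_true]
  exact ⟨by ring, by ring⟩

theorem semiconj_xAxisReflection_rop_lop (v : ℝ) :
    Function.Semiconj xAxisReflection (Rop v) (Lop v) :=
  (semiconj_xAxisReflection_lop_rop v).inverse_left
    xAxisReflection_involutive xAxisReflection_involutive

theorem semiconj_xAxisReflection_sop (v : ℝ) :
    Function.Semiconj xAxisReflection (Sop v) (Sop v) := by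
  intro c
  simp only [xAxisReflection, Sop, Real.sin_neg, Real.cos_neg, Prod.mk.injEq, true_and,
    and_true]
  ring

theorem semiconj_xAxisReflection_lsr_rsl (t p q : ℝ) :
    Function.Semiconj xAxisReflection (Rop q ∘ Sop p ∘ Lop t) (Lop q ∘ Sop p ∘ Rop t) :=
  (semiconj_xAxisReflection_rop_lop q).comp_right <|
    (semiconj_xAxisReflection_sop p).comp_right (semiconj_xAxisReflection_lop_rop t)

theorem lsr_reflection_equiv_general (c c' : ℝ × ℝ × ℝ) (t p q : ℝ) :
    Rop q (Sop p (Lop t c)) = c' ↔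
      Lop q (Sop p (Rop t (xAxisReflection c))) = xAxisReflection c' := by
  have path_reflection : xAxisReflection (Rop q (Sop p (Lop t c))) =
      Lop q (Sop p (Rop t (xAxisReflection c))) :=
    semiconj_xAxisReflection_lsr_rsl t p q c
  rw [← path_reflection, xAxisReflection_involutive.injective.eq_iff]

theorem lsr_reflection_equiv (α β d t p q : ℝ)
    (h : Rop q (Sop p (Lop t (0, 0, α))) = (d, 0, β)) :
    Lop q (Sop p (Rop t (0, 0, -α))) = (d, 0, -β) := by
  simpa only [xAxisReflection, neg_zero] using
    (lsr_reflection_equiv_general (0, 0, α) (d, 0, β) t p q).mp h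
end

section
/- Reversal equivalence for LSL paths: let α, β, d, t, p, q ∈ ℝ. If L_q(S_p(L_t(0,0,α))) = (d, 0, β), then R_t(S_p(R_q(0,0,β))) = (d, 0, α). (An LSL path with initial/final segment lengths (t, q) for orientation pair (α, β) yields a topologically equivalent RSR path with segment lengths (q, t) for the pair (β, α).) -/
open Real

/-!
A left arc traversed backwards is a right arc of the same length, with every heading shifted by `π`;
a half-turn of the plane keeps right arcs right arcs and undoes this shift. Taking the half-turn
about the midpoint of the two endpoints exchanges these endpoints, so an LSL path is carried to an
RSR path between the same points, with its segments in the opposite order and its terminal headings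
exchanged.
-/

/-- The half-turn about `(a / 2, b / 2)` combined with reversal of the direction of travel, used to
turn a path into the reversed one. The heading is unchanged: the half-turn adds `π` to it and the
reversal adds `-π`. -/
def halfTurnReversal (a b : ℝ) (c : ℝ × ℝ × ℝ) : ℝ × ℝ × ℝ :=
  (a - c.1, b - c.2.1, c.2.2)

theorem rop_halfTurnReversal_lop (a b v : ℝ) (c : ℝ × ℝ × ℝ) :
    Rop v (halfTurnReversal a b (Lop v c)) = halfTurnReversal a b c := by
  simp only [Rop, Lop, halfTurnReversal, add_sub_cancel_right, Prod.mk.injEq, and_true]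
  constructor <;> ring

theorem lop_halfTurnReversal_rop (a b v : ℝ) (c : ℝ × ℝ × ℝ) :
    Lop v (halfTurnReversal a b (Rop v c)) = halfTurnReversal a b c := by
  simp only [Rop, Lop, halfTurnReversal, sub_add_cancel, Prod.mk.injEq, and_true]
  constructor <;> ring

theorem sop_halfTurnReversal_sop (a b v : ℝ) (c : ℝ × ℝ × ℝ) :
    Sop v (halfTurnReversal a b (Sop v c)) = halfTurnReversal a b c := by
  simp only [Sop, halfTurnReversal, Prod.mk.injEq, and_true]
  constructor <;> ring

theorem rsr_halfTurnReversal_lsl (a b t p q : ℝ) (c : ℝ × ℝ × ℝ) :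
    Rop t (Sop p (Rop q (halfTurnReversal a b (Lop q (Sop p (Lop t c)))))) =
      halfTurnReversal a b c := by
  rw [rop_halfTurnReversal_lop, sop_halfTurnReversal_sop, rop_halfTurnReversal_lop]

theorem lsl_halfTurnReversal_rsr (a b t p q : ℝ) (c : ℝ × ℝ × ℝ) :
    Lop q (Sop p (Lop t (halfTurnReversal a b (Rop t (Sop p (Rop q c)))))) =
      halfTurnReversal a b c := by
  rw [lop_halfTurnReversal_rop, sop_halfTurnReversal_sop, lop_halfTurnReversal_rop]

theorem lsl_reversal_equiv_general (x y x' y' α β t p q : ℝ) :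
    Lop q (Sop p (Lop t (x, y, α))) = (x', y', β) ↔
      Rop t (Sop p (Rop q (x, y, β))) = (x', y', α) := by
  constructor <;> intro h
  · simpa [h, halfTurnReversal] using
      rsr_halfTurnReversal_lsl (x + x') (y + y') t p q (x, y, α)
  · simpa [h, halfTurnReversal] using
      lsl_halfTurnReversal_rsr (x + x') (y + y') t p q (x, y, β)

theorem lsl_reversal_equiv (α β d t p q : ℝ)
    (h : Lop q (Sop p (Lop t (0, 0, α))) = (d, 0, β)) :
    Rop t (Sop p (Rop q (0, 0, β))) = (d, 0, α) :=
  (lsl_reversal_equiv_general 0 0 d 0 α β t p q).1 h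
end

section
/- Reversal equivalence for RLR paths: let α, β, d, t, p, q ∈ ℝ. If R_q(L_p(R_t(0,0,α))) = (d, 0, β), then L_t(R_p(L_q(0,0,β))) = (d, 0, α). (An RLR path with initial/final segment lengths (t, q) for orientation pair (α, β) yields a topologically equivalent LRL path with segment lengths (q, t) for the pair (β, α).) -/
open Real

/-!
Reversing a motion along a fixed path and then turning the plane by a half-turn preserves headings:
each of the two operations changes the direction of travel by `π`. Reversing exchanges left arcs
with right arcs, and a half-turn preserves turning direction. Hence the half-turn that exchanges
the two endpoints of an RLR path carries the reversed path to an LRL path between the same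
endpoints, with the segments traversed in the opposite order and the two headings exchanged.
-/

/-- Reversal of the direction of travel followed by the half-turn of the plane that exchanges the
origin and `s`. The two operations change the heading by `π` each, so the encoding leaves the
heading coordinate unchanged. -/
def reversal (s : ℝ × ℝ) : ℝ × ℝ × ℝ → ℝ × ℝ × ℝ :=
  fun c => (s.1 - c.1, s.2 - c.2.1, c.2.2)

theorem reversal_involutive (s : ℝ × ℝ) : Function.Involutive (reversal s) := fun c => by
  simp [reversal]

theorem reversal_add_apply_left (x y x' y' φ : ℝ) :
    reversal (x + x', y + y') (x, y, φ) = (x', y', φ) := by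
  simp [reversal]

theorem reversal_add_apply_right (x y x' y' φ : ℝ) :
    reversal (x + x', y + y') (x', y', φ) = (x, y, φ) := by
  simp [reversal]

theorem Lop_reversal (s : ℝ × ℝ) (v : ℝ) (c : ℝ × ℝ × ℝ) :
    Lop v (reversal s c) = reversal s (Rop (-v) c) := by
  ext <;> simp only [Lop, Rop, reversal, sub_neg_eq_add] <;> ring

theorem Rop_reversal (s : ℝ × ℝ) (v : ℝ) (c : ℝ × ℝ × ℝ) :
    Rop v (reversal s c) = reversal s (Lop (-v) c) := by
  ext <;> simp only [Lop, Rop, reversal, ← sub_eq_add_neg] <;> ring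

theorem Lop_neg_eq_iff {v : ℝ} {c c' : ℝ × ℝ × ℝ} : Lop (-v) c = c' ↔ c = Lop v c' := by
  constructor <;> rintro rfl <;> simp [Lop]

theorem Rop_neg_eq_iff {v : ℝ} {c c' : ℝ × ℝ × ℝ} : Rop (-v) c = c' ↔ c = Rop v c' := by
  constructor <;> rintro rfl <;> simp [Rop]

theorem rlr_reversal_equiv_general {x y x' y' α β t p q : ℝ} :
    Rop q (Lop p (Rop t (x, y, α))) = (x', y', β) ↔
      Lop t (Rop p (Lop q (x, y, β))) = (x', y', α) := by
  let ρ := reversal (x + x', y + y')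
  have reversed_path : Lop t (Rop p (Lop q (x, y, β))) =
      ρ (Rop (-t) (Lop (-p) (Rop (-q) (x', y', β)))) := by
    rw [← reversal_add_apply_right x y x' y' β, Lop_reversal, Rop_reversal, Lop_reversal]
  rw [reversed_path, ← reversal_add_apply_left x y x' y' α,
    (reversal_involutive _).injective.eq_iff, Rop_neg_eq_iff, Lop_neg_eq_iff, Rop_neg_eq_iff,
    eq_comm]

theorem rlr_reversal_equiv (α β d t p q : ℝ)
    (h : Rop q (Lop p (Rop t (0, 0, α))) = (d, 0, β)) :
    Lop t (Rop p (Lop q (0, 0, β))) = (d, 0, α) :=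
  rlr_reversal_equiv_general.mp h
end

section
/- Monotonicity of the LSL path length in the initial orientation: fix β ∈ [0, π/2] and d > 0. The function 𝓛_lsl(α) = −α + β + sqrt((d + sin α − sin β)² + (cos α − cos β)²) is monotone nonincreasing in α on the interval [0, π/2]. -/
open Real

/-!
The straight segment of an LSL path is as long as the distance between the centres of its two
turning circles. The centre of the first circle itself runs along a unit circle as `α` varies, so
it moves at unit speed; the distance to the other centre therefore grows at rate at most `1`, and
the term `-α` compensates for this growth.
-/

/-- The centre of the left-turning circle of radius `r` at position `p` with heading `θ`; it lies at
distance `r` from `p`, in the direction obtained by turning the heading left by a right angle. -/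
noncomputable def leftTurnCenter (p : ℂ) (r θ : ℝ) : ℂ :=
  circleMap p r (θ + π / 2)

namespace leftTurnCenter

variable (p : ℂ) (r θ : ℝ)

theorem re_eq : (leftTurnCenter p r θ).re = p.re - r * sin θ := by
  simp [leftTurnCenter, circleMap, Complex.exp_re, Real.cos_add_pi_div_two, sub_eq_add_neg]

theorem im_eq : (leftTurnCenter p r θ).im = p.im + r * cos θ := by
  simp [leftTurnCenter, circleMap, Complex.exp_im, Real.sin_add_pi_div_two]

theorem lipschitzWith : LipschitzWith (nnabs r) (leftTurnCenter p r) := by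
  simpa using! (lipschitzWith_circleMap p r).comp (isometry_add_right (π / 2)).lipschitz

theorem dist_eq (q : ℂ) (α β : ℝ) :
    dist (leftTurnCenter p r α) (leftTurnCenter q r β) =
      √((q.re - p.re + r * (sin α - sin β)) ^ 2 + (q.im - p.im - r * (cos α - cos β)) ^ 2) := by
  rw [Complex.dist_eq_re_im, re_eq, re_eq, im_eq, im_eq]
  congr 1
  ring

theorem lipschitzWith_dist (c : ℂ) :
    LipschitzWith (nnabs r) fun θ => dist (leftTurnCenter p r θ) c := by
  simpa using! (LipschitzWith.dist_left c).comp (lipschitzWith p r)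

end leftTurnCenter

theorem antitone_sub_mul_of_lipschitzWith {K : NNReal} {f : ℝ → ℝ} (hf : LipschitzWith K f) :
    Antitone fun x => f x - K * x := by
  intro x y hxy
  have hgrowth : f y ≤ f x + K * (y - x) := by
    simpa [Real.dist_eq, abs_of_nonneg (sub_nonneg.2 hxy)] using hf.le_add_mul y x
  linarith

theorem lsl_length_antitone_general (β d : ℝ) :
    Antitone fun α => -α + β + √((d + sin α - sin β) ^ 2 + (cos α - cos β) ^ 2) := by
  have hdist (α : ℝ) : dist (leftTurnCenter 0 1 α) (leftTurnCenter d 1 β) =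
      √((d + sin α - sin β) ^ 2 + (cos α - cos β) ^ 2) := by
    rw [leftTurnCenter.dist_eq]
    simp [add_sub_assoc, sub_sq_comm (cos β)]
  have hanti := (antitone_sub_mul_of_lipschitzWith
    (leftTurnCenter.lipschitzWith_dist 0 1 (leftTurnCenter d 1 β))).add_const β
  convert hanti using 2 with α
  rw [hdist, map_one, NNReal.coe_one]
  ring

theorem lsl_length_antitone (β d : ℝ) (hβ : β ∈ Set.Icc 0 (Real.pi / 2)) (hd : 0 < d) :
    AntitoneOn
      (fun α => -α + β +
        Real.sqrt ((d + Real.sin α - Real.sin β) ^ 2 + (Real.cos α - Real.cos β) ^ 2))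
      (Set.Icc 0 (Real.pi / 2)) :=
  (lsl_length_antitone_general β d).antitoneOn _
end

section
/- Monotonicity of the RSR path length in the initial orientation: fix β ∈ [0, π/2] and d > 0. The function 𝓛_rsr(α) = α − β + sqrt((d − sin α + sin β)² + (cos α − cos β)²) is monotone nondecreasing in α on the interval [0, π/2]. -/
/-!
The straight segment of an RSR path is as long as the distance between the centres of its two
turning circles. Rotating the initial heading by `t` moves the first centre along a unit circle,
hence by at most `t`, so the segment cannot shrink by more than the length `t` that the turns gain.
-/

open Real

theorem monotone_mul_add_of_lipschitzWith {K : NNReal} {f : ℝ → ℝ} (hf : LipschitzWith K f) :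
    Monotone fun t => K * t + f t := by
  intro s t hst
  have drop_le : f s ≤ f t + K * (t - s) := by
    simpa only [Real.dist_eq, abs_sub_comm s t, abs_of_nonneg (sub_nonneg.2 hst)] using
      hf.le_add_mul s t
  change K * s + f s ≤ K * t + f t
  linarith

theorem monotone_abs_mul_add_dist_circleMap (c : ℂ) (R : ℝ) (z : ℂ) :
    Monotone fun θ => |R| * θ + dist (circleMap c R θ) z := by
  have lipschitz_dist : LipschitzWith (Real.nnabs R) fun θ => dist (circleMap c R θ) z := by
    simpa only [one_mul] using! (LipschitzWith.dist_left z).comp (lipschitzWith_circleMap c R)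
  simpa only [Real.coe_nnabs] using monotone_mul_add_of_lipschitzWith lipschitz_dist

/-- The centre of the unit circle traversed in a right (clockwise) turn from the configuration
with position `z` and heading `θ`: it lies at unit distance from `z`, at a right angle clockwise
from the heading. -/
noncomputable def rightTurnCenter (z : ℂ) (θ : ℝ) : ℂ :=
  circleMap z 1 (θ - π / 2)

theorem re_rightTurnCenter (z : ℂ) (θ : ℝ) : (rightTurnCenter z θ).re = z.re + sin θ := by
  simp only [rightTurnCenter, circleMap, Complex.ofReal_one, one_mul, Complex.add_re,
    Complex.exp_ofReal_mul_I_re, cos_sub_pi_div_two]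

theorem im_rightTurnCenter (z : ℂ) (θ : ℝ) : (rightTurnCenter z θ).im = z.im - cos θ := by
  simp only [rightTurnCenter, circleMap, Complex.ofReal_one, one_mul, Complex.add_im,
    Complex.exp_ofReal_mul_I_im, sin_sub_pi_div_two, ← sub_eq_add_neg]

theorem monotone_add_dist_rightTurnCenter (z w : ℂ) :
    Monotone fun α => α + dist (rightTurnCenter z α) w := by
  intro α₁ α₂ hα
  have shifted_le := monotone_abs_mul_add_dist_circleMap z 1 w (sub_le_sub_right hα (π / 2))
  simp only [abs_one, one_mul] at shifted_le
  change α₁ + dist (circleMap z 1 (α₁ - π / 2)) w ≤ α₂ + dist (circleMap z 1 (α₂ - π / 2)) w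
  linarith

theorem dist_rightTurnCenter (α β d : ℝ) :
    dist (rightTurnCenter 0 α) (rightTurnCenter d β) =
      √((d - sin α + sin β) ^ 2 + (cos α - cos β) ^ 2) := by
  rw [Complex.dist_eq_re_im]
  simp only [re_rightTurnCenter, im_rightTurnCenter, Complex.zero_re, Complex.zero_im,
    Complex.ofReal_re, Complex.ofReal_im]
  congr 1
  ring

theorem rsr_length_monotone_general (β d : ℝ) :
    Monotone fun α => α - β + √((d - sin α + sin β) ^ 2 + (cos α - cos β) ^ 2) := by
  simpa only [dist_rightTurnCenter, neg_add_eq_sub, ← add_assoc] using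
    (monotone_add_dist_rightTurnCenter 0 (rightTurnCenter d β)).const_add (-β)

theorem rsr_length_monotone (β d : ℝ) (hβ : β ∈ Set.Icc 0 (Real.pi / 2)) (hd : 0 < d) :
    MonotoneOn
      (fun α => α - β +
        Real.sqrt ((d - Real.sin α + Real.sin β) ^ 2 + (Real.cos α - Real.cos β) ^ 2))
      (Set.Icc 0 (Real.pi / 2)) :=
  (rsr_length_monotone_general β d).monotoneOn _
end

section
/- Comparison of RSR and LSL path lengths in class a₁₁: let 0 ≤ α < β ≤ π/2 and d ≥ 0. Then α − β + sqrt((d − sin α + sin β)² + (cos α − cos β)²) < −α + β + sqrt((d + sin α − sin β)² + (cos α − cos β)²), i.e. 𝓛_rsr < 𝓛_lsl. -/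
open Real

/-!
Each square root is the distance between the centres of the initial and final turning circles. Up to
a vertical reflection, the RSR displacement of centres is the LSL one moved horizontally by
`2 (sin β - sin α)`, so by the triangle inequality it is longer by at most `2 |sin β - sin α|`. This
is less than the difference `2 (β - α)` of the turning terms, because `sin` strictly decreases the
distance between distinct points.
-/

theorem abs_sin_sub_sin_lt {x y : ℝ} (h : x ≠ y) : |sin x - sin y| < |x - y| := by
  have half_ne_zero : (x - y) / 2 ≠ 0 := div_ne_zero (sub_ne_zero.mpr h) two_ne_zero
  calc |sin x - sin y|
      = 2 * |sin ((x - y) / 2)| * |cos ((x + y) / 2)| := by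
        rw [sin_sub_sin, abs_mul, abs_mul, abs_two]
    _ ≤ 2 * |sin ((x - y) / 2)| := mul_le_of_le_one_right (by positivity) (abs_cos_le_one _)
    _ < 2 * |(x - y) / 2| := by gcongr; exact abs_sin_lt_abs half_ne_zero
    _ = |x - y| := by rw [abs_div, abs_two, mul_div_cancel₀ _ two_ne_zero]

theorem sqrt_add_sq_add_add_sq_le (x y u v : ℝ) :
    √((x + u) ^ 2 + (y + v) ^ 2) ≤ √(x ^ 2 + y ^ 2) + √(u ^ 2 + v ^ 2) := by
  simpa only [Complex.norm_eq_sqrt_sq_add_sq, Complex.add_re, Complex.add_im] using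
    norm_add_le (⟨x, y⟩ : ℂ) ⟨u, v⟩

theorem sqrt_add_sq_add_sq_le_add_abs (x y u : ℝ) :
    √((x + u) ^ 2 + y ^ 2) ≤ √(x ^ 2 + y ^ 2) + |u| := by
  simpa [sqrt_sq_eq_abs] using sqrt_add_sq_add_add_sq_le x y u 0

theorem rsr_lt_lsl_a11_general {α β : ℝ} (hαβ : α < β) (d : ℝ) :
    α - β + √((d - sin α + sin β) ^ 2 + (cos α - cos β) ^ 2) <
      -α + β + √((d + sin α - sin β) ^ 2 + (cos α - cos β) ^ 2) := by
  have sin_sub_lt : |sin β - sin α| < β - α := by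
    simpa only [abs_of_pos (sub_pos.mpr hαβ)] using abs_sin_sub_sin_lt hαβ.ne'
  have sqrt_le : √((d - sin α + sin β) ^ 2 + (cos α - cos β) ^ 2) ≤
      √((d + sin α - sin β) ^ 2 + (cos α - cos β) ^ 2) + 2 * |sin β - sin α| := by
    have shift : d - sin α + sin β = d + sin α - sin β + 2 * (sin β - sin α) := by ring
    simpa only [shift, abs_mul, abs_two] using
      sqrt_add_sq_add_sq_le_add_abs (d + sin α - sin β) (cos α - cos β) (2 * (sin β - sin α))
  linarith

theorem rsr_lt_lsl_a11 (α β d : ℝ) (hα : 0 ≤ α) (hαβ : α < β) (hβ : β ≤ Real.pi / 2)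
    (hd : 0 ≤ d) :
    α - β + Real.sqrt ((d - Real.sin α + Real.sin β) ^ 2 + (Real.cos α - Real.cos β) ^ 2) <
      -α + β + Real.sqrt ((d + Real.sin α - Real.sin β) ^ 2 + (Real.cos α - Real.cos β) ^ 2) :=
  rsr_lt_lsl_a11_general hαβ d
end

section
/- Comparison of RLR and LRL path lengths in class a₁₁ for the short path case: let 0 ≤ α < β ≤ π/2 and 0 < d with d < sin α + sin β + sqrt(4 − (cos α + cos β)²). Set A_r = (6 − d² + 2·cos(α − β) + 2d·(sin α − sin β))/8 and A_l = (6 − d² + 2·cos(α − β) − 2d·(sin α − sin β))/8, and assume −1 ≤ A_r and −1 ≤ A_l. Then α − β + 2·arccos(A_r) < −α + β + 2·arccos(A_l), i.e. 𝓛_rlr < 𝓛_lrl. -/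
open Real

/-!
Put `δ = β - α`. The claim is `arccos A_r - arccos A_l < δ`, which is trivial if `π < δ` and
otherwise follows from `cos δ < cos (arccos A_r - arccos A_l)`, where
`cos (arccos x - arccos y) = x * y + √(1 - x ^ 2) * √(1 - y ^ 2)`. This inequality holds
as soon as the Gram determinant `1 - x ^ 2 - y ^ 2 + 2 * c * x * y - c ^ 2`, with `c = cos δ`, is
positive. For Dubins paths the determinant factors as a positive multiple of
`(2 * d * (sin α + sin β)) ^ 2 - (d ^ 2 - 2 * (1 - c)) ^ 2`, and the short path condition says
exactly that `d ^ 2 - 2 * (1 - c) < 2 * d * (sin α + sin β)`. If the left-hand side is nonnegative,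
the factorization concludes. Otherwise `d` is smaller than the chord `√(2 * (1 - c))` of `δ`, so
`|A_r - A_l| < 1 - c`, and this alone forces the inequality.
-/

section Arccos

variable {x y c δ : ℝ}

lemma abs_arccos_sub_arccos_le_pi (x y : ℝ) : |arccos x - arccos y| ≤ π :=
  abs_sub_le_of_nonneg_of_le (arccos_nonneg x) (arccos_le_pi x) (arccos_nonneg y) (arccos_le_pi y)

lemma abs_lt_of_cos_lt_cos (hδ : 0 ≤ δ) (hx : |x| ≤ π) (h : cos δ < cos x) : |x| < δ := by
  by_contra! hle
  exact h.not_ge (cos_abs x ▸ cos_le_cos_of_nonneg_of_le_pi hδ hx hle)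

lemma cos_arccos_sub_arccos (hx : x ∈ Set.Icc (-1) 1) (hy : y ∈ Set.Icc (-1) 1) :
    cos (arccos x - arccos y) = x * y + √(1 - x ^ 2) * √(1 - y ^ 2) := by
  rw [cos_sub, cos_arccos hx.1 hx.2, cos_arccos hy.1 hy.2, sin_arccos, sin_arccos]

lemma lt_cos_arccos_sub_arccos_of_gram_pos (hx : x ∈ Set.Icc (-1) 1) (hy : y ∈ Set.Icc (-1) 1)
    (h : 0 < 1 - x ^ 2 - y ^ 2 + 2 * c * (x * y) - c ^ 2) :
    c < cos (arccos x - arccos y) := by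
  have hx0 : 0 ≤ 1 - x ^ 2 := by nlinarith [hx.1, hx.2]
  have hsq : (c - x * y) ^ 2 < (1 - x ^ 2) * (1 - y ^ 2) := by linarith
  rw [cos_arccos_sub_arccos hx hy, ← sqrt_mul hx0, ← sub_lt_iff_lt_add']
  exact lt_sqrt_of_sq_lt hsq

lemma lt_cos_arccos_sub_arccos_of_abs_sub_lt (hx : x ∈ Set.Icc (-1) 1)
    (hy : y ∈ Set.Icc (-1) 1) (h : |x - y| < 1 - c) :
    c < cos (arccos x - arccos y) := by
  rcases lt_or_ge c (x * y) with hlt | hle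
  · rw [cos_arccos_sub_arccos hx hy]
    exact hlt.trans_le (le_add_of_nonneg_right (by positivity))
  · apply lt_cos_arccos_sub_arccos_of_gram_pos hx hy
    have hc : 0 < 1 - c := (abs_nonneg _).trans_lt h
    calc
      0 < (1 - c) ^ 2 - (x - y) ^ 2 := sub_pos.2 (sq_lt_sq' (abs_lt.1 h).1 (abs_lt.1 h).2)
      _ ≤ (1 - c) * (1 + c - 2 * (x * y)) - (x - y) ^ 2 := by nlinarith
      _ = 1 - x ^ 2 - y ^ 2 + 2 * c * (x * y) - c ^ 2 := by ring

end Arccos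

section Trigonometry

lemma sin_sub_sin_sq_add_cos_sub_cos_sq (α β : ℝ) :
    (sin α - sin β) ^ 2 + (cos α - cos β) ^ 2 = 2 * (1 - cos (α - β)) := by
  rw [cos_sub]
  linear_combination sin_sq_add_cos_sq α + sin_sq_add_cos_sq β

lemma sin_add_sin_sq_add_cos_add_cos_sq (α β : ℝ) :
    (sin α + sin β) ^ 2 + (cos α + cos β) ^ 2 = 2 * (1 + cos (α - β)) := by
  rw [cos_sub]
  linear_combination sin_sq_add_cos_sq α + sin_sq_add_cos_sq β

lemma one_sub_cos_mul_sin_add_sin_sq (α β : ℝ) :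
    (1 - cos (α - β)) * (sin α + sin β) ^ 2 = (1 + cos (α - β)) * (cos α - cos β) ^ 2 := by
  have hsq : (sin α ^ 2 - sin β ^ 2) ^ 2 = (cos α ^ 2 - cos β ^ 2) ^ 2 := by
    rw [sin_sq, sin_sq]
    ring
  linear_combination hsq / 2
    - (sin α + sin β) ^ 2 / 2 * sin_sub_sin_sq_add_cos_sub_cos_sq α β
    + (cos α - cos β) ^ 2 / 2 * sin_add_sin_sq_add_cos_add_cos_sq α β

end Trigonometry

/-- The cosine of the angle `p_rlr` in the length formula of the RLR path from `(0, 0, α)` to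
`(d, 0, β)` with unit turning radius. The path exists only if this number is at least `-1`. -/
noncomputable def rlrMidCos (α β d : ℝ) : ℝ :=
  (6 - d ^ 2 + 2 * cos (α - β) + 2 * d * (sin α - sin β)) / 8

/-- The counterpart of `rlrMidCos` for the LRL path: the cosine of the angle `p_lrl`. -/
noncomputable def lrlMidCos (α β d : ℝ) : ℝ :=
  (6 - d ^ 2 + 2 * cos (α - β) - 2 * d * (sin α - sin β)) / 8

/-- The value `𝓛_rlr` of the length formula of the RLR path from `(0, 0, α)` to `(d, 0, β)`, with
no reduction of angles modulo `2 * π`. It is meaningful only if `-1 ≤ rlrMidCos α β d`, since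
`arccos` is constantly `π` below `-1`. -/
noncomputable def rlrLength (α β d : ℝ) : ℝ :=
  α - β + 2 * arccos (rlrMidCos α β d)

/-- The counterpart of `rlrLength` for the LRL path: the value `𝓛_lrl` of its length formula,
meaningful only if `-1 ≤ lrlMidCos α β d`. -/
noncomputable def lrlLength (α β d : ℝ) : ℝ :=
  -α + β + 2 * arccos (lrlMidCos α β d)

section Dubins

variable {α β d : ℝ}

-- The numerator is the squared distance between the centres of the two right-turn circles.
lemma rlrMidCos_eq (α β d : ℝ) :
    rlrMidCos α β d = 1 - ((d - (sin α - sin β)) ^ 2 + (cos α - cos β) ^ 2) / 8 := by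
  unfold rlrMidCos
  linear_combination sin_sub_sin_sq_add_cos_sub_cos_sq α β / 8

lemma lrlMidCos_eq_rlrMidCos_neg (α β d : ℝ) : lrlMidCos α β d = rlrMidCos α β (-d) := by
  unfold lrlMidCos rlrMidCos
  ring

lemma rlrMidCos_le_one (α β d : ℝ) : rlrMidCos α β d ≤ 1 := by
  rw [rlrMidCos_eq, sub_le_self_iff]
  positivity

lemma lrlMidCos_le_one (α β d : ℝ) : lrlMidCos α β d ≤ 1 :=
  lrlMidCos_eq_rlrMidCos_neg α β d ▸ rlrMidCos_le_one α β (-d)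

lemma rlrMidCos_sub_lrlMidCos (α β d : ℝ) :
    rlrMidCos α β d - lrlMidCos α β d = d * (sin α - sin β) / 2 := by
  unfold rlrMidCos lrlMidCos
  ring

lemma gram_rlrMidCos_lrlMidCos (α β d : ℝ) :
    1 - rlrMidCos α β d ^ 2 - lrlMidCos α β d ^ 2
        + 2 * cos (α - β) * (rlrMidCos α β d * lrlMidCos α β d) - cos (α - β) ^ 2 =
      (1 - cos (α - β)) / 32 *
        ((2 * d * (sin α + sin β)) ^ 2 - (d ^ 2 - 2 * (1 - cos (α - β))) ^ 2) := by
  unfold rlrMidCos lrlMidCos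
  linear_combination -d ^ 2 / 8 * one_sub_cos_mul_sin_add_sin_sq α β
    - d ^ 2 * (1 + cos (α - β)) / 8 * sin_sub_sin_sq_add_cos_sub_cos_sq α β

lemma sq_sub_lt_of_short (hd : 0 < d)
    (hshort : d < sin α + sin β + √(4 - (cos α + cos β) ^ 2)) :
    d ^ 2 - 2 * (1 - cos (α - β)) < 2 * d * (sin α + sin β) := by
  have hcos : cos (α - β) ≤ 1 := cos_le_one _
  rcases lt_or_ge d (sin α + sin β) with hlt | hle
  · nlinarith
  · rw [← sub_lt_iff_lt_add', lt_sqrt (sub_nonneg.2 hle)] at hshort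
    linarith [sin_add_sin_sq_add_cos_add_cos_sq α β]

lemma abs_rlrMidCos_sub_lrlMidCos_lt (hd : d ^ 2 < 2 * (1 - cos (α - β))) :
    |rlrMidCos α β d - lrlMidCos α β d| < 1 - cos (α - β) := by
  have hsin : (sin α - sin β) ^ 2 ≤ 2 * (1 - cos (α - β)) := by
    linarith [sin_sub_sin_sq_add_cos_sub_cos_sq α β, sq_nonneg (cos α - cos β)]
  have hpos : 0 < 2 * (1 - cos (α - β)) := (sq_nonneg d).trans_lt hd
  rw [rlrMidCos_sub_lrlMidCos]
  apply abs_lt_of_sq_lt_sq _ (by linarith)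
  calc
    (d * (sin α - sin β) / 2) ^ 2 = d ^ 2 * (sin α - sin β) ^ 2 / 4 := by ring
    _ ≤ d ^ 2 * (2 * (1 - cos (α - β))) / 4 := by gcongr
    _ < 2 * (1 - cos (α - β)) * (2 * (1 - cos (α - β))) / 4 := by gcongr
    _ = (1 - cos (α - β)) ^ 2 := by ring

lemma cos_lt_cos_arccos_sub_arccos_of_short (hd : 0 < d) (hcos : cos (α - β) < 1)
    (hshort : d < sin α + sin β + √(4 - (cos α + cos β) ^ 2))
    (hAr : -1 ≤ rlrMidCos α β d) (hAl : -1 ≤ lrlMidCos α β d) :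
    cos (α - β) < cos (arccos (rlrMidCos α β d) - arccos (lrlMidCos α β d)) := by
  have hr : rlrMidCos α β d ∈ Set.Icc (-1) 1 := ⟨hAr, rlrMidCos_le_one α β d⟩
  have hl : lrlMidCos α β d ∈ Set.Icc (-1) 1 := ⟨hAl, lrlMidCos_le_one α β d⟩
  rcases lt_or_ge (d ^ 2) (2 * (1 - cos (α - β))) with hlt | hge
  · exact lt_cos_arccos_sub_arccos_of_abs_sub_lt hr hl (abs_rlrMidCos_sub_lrlMidCos_lt hlt)
  · apply lt_cos_arccos_sub_arccos_of_gram_pos hr hl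
    rw [gram_rlrMidCos_lrlMidCos]
    have hsq := pow_lt_pow_left₀ (sq_sub_lt_of_short hd hshort) (sub_nonneg.2 hge) two_ne_zero
    exact mul_pos (by linarith) (sub_pos.2 hsq)

lemma abs_arccos_rlrMidCos_sub_arccos_lrlMidCos_lt (hαβ : α < β) (hd : 0 < d)
    (hshort : d < sin α + sin β + √(4 - (cos α + cos β) ^ 2))
    (hAr : -1 ≤ rlrMidCos α β d) (hAl : -1 ≤ lrlMidCos α β d) :
    |arccos (rlrMidCos α β d) - arccos (lrlMidCos α β d)| < β - α := by
  rcases lt_or_ge π (β - α) with hlt | hle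
  · exact (abs_arccos_sub_arccos_le_pi _ _).trans_lt hlt
  · have hcomm : cos (α - β) = cos (β - α) := by rw [← cos_neg, neg_sub]
    have hcos : cos (α - β) < 1 := by
      rw [hcomm, ← cos_zero]
      exact cos_lt_cos_of_nonneg_of_le_pi le_rfl hle (sub_pos.2 hαβ)
    apply abs_lt_of_cos_lt_cos (sub_nonneg.2 hαβ.le) (abs_arccos_sub_arccos_le_pi _ _)
    exact hcomm ▸ cos_lt_cos_arccos_sub_arccos_of_short hd hcos hshort hAr hAl

theorem rlr_lt_lrl_a11_short_general (hαβ : α < β) (hd : 0 < d)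
    (hshort : d < sin α + sin β + √(4 - (cos α + cos β) ^ 2))
    (hAr : -1 ≤ rlrMidCos α β d) (hAl : -1 ≤ lrlMidCos α β d) :
    rlrLength α β d < lrlLength α β d := by
  have hlt := (abs_lt.1 (abs_arccos_rlrMidCos_sub_arccos_lrlMidCos_lt hαβ hd hshort hAr hAl)).2
  unfold rlrLength lrlLength
  linarith

end Dubins

theorem rlr_lt_lrl_a11_short (α β d : ℝ) (hα : 0 ≤ α) (hαβ : α < β) (hβ : β ≤ Real.pi / 2)
    (hd : 0 < d)
    (hshort : d < Real.sin α + Real.sin β + Real.sqrt (4 - (Real.cos α + Real.cos β) ^ 2))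
    (hAr : -1 ≤ (6 - d ^ 2 + 2 * Real.cos (α - β) + 2 * d * (Real.sin α - Real.sin β)) / 8)
    (hAl : -1 ≤ (6 - d ^ 2 + 2 * Real.cos (α - β) - 2 * d * (Real.sin α - Real.sin β)) / 8) :
    α - β + 2 * Real.arccos
        ((6 - d ^ 2 + 2 * Real.cos (α - β) + 2 * d * (Real.sin α - Real.sin β)) / 8) <
      -α + β + 2 * Real.arccos
        ((6 - d ^ 2 + 2 * Real.cos (α - β) - 2 * d * (Real.sin α - Real.sin β)) / 8) :=
  rlr_lt_lrl_a11_short_general hαβ hd hshort hAr hAl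
end
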